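/- Let B ⊆ {2,…,K} be nonempty, J ⊆ (0,∞) an open interval, and N_a : J → (0,∞) for a ∈ [K] differentiable functions such that for all N ∈ J: Σ_{a∈[K]} N_a(N) = N; N_1 is constant on J, and N_a is constant on J for every a ∈ B̄^c; and W_a(N_1, N_a(N)) takes a common value I_B(N) for all a ∈ B. Then for all N ∈ J: I_B'(N) = (Σ_{a∈B} d_{a,a}^{-1})^{-1} and, for every a ∈ B, N_a'(N) = d_{a,a}^{-1}·(Σ_{a∈B} d_{a,a}^{-1})^{-1}. In particular I_B(N) and each N_a(N), a ∈ B, are strictly increasing functions of N on J. -/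

import Mathlib

open scoped BigOperators

/-- A single-parameter exponential family, given by the log-partition function `b`,
smooth with positive second derivative on an open interval `Θ`, together with the
inverse `θof` of `b'` on the set of means `S = b'(Θ)`. -/
structure SPEF where
  Θ : Set ℝ
  Θ_isOpen : IsOpen Θ
  Θ_ordConnected : Set.OrdConnected Θ
  Θ_nonempty : Θ.Nonempty
  b : ℝ → ℝ
  b_smooth : ContDiffOn ℝ (⊤ : ℕ∞) b Θ
  b_conv : ∀ t ∈ Θ, 0 < iteratedDeriv 2 b t
  θof : ℝ → ℝ
  θof_mem : ∀ μ ∈ deriv b '' Θ, θof μ ∈ Θ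
  θof_spec : ∀ μ ∈ deriv b '' Θ, deriv b (θof μ) = μ

namespace SPEF

/-- The set of means of the family. -/
def S (F : SPEF) : Set ℝ := deriv F.b '' F.Θ

/-- KL divergence `d(μ, x)` between the members of the family with means `μ` and `x`. -/
noncomputable def d (F : SPEF) (μ x : ℝ) : ℝ :=
  (F.θof μ - F.θof x) * μ - F.b (F.θof μ) + F.b (F.θof x)

end SPEF

/-- A `K`-armed bandit instance with arm distributions in a fixed SPEF; arm `0`
(the paper's arm `1`) is the unique best arm. -/
structure Bandit (K : ℕ) [NeZero K] extends SPEF where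
  two_le : 2 ≤ K
  μ : Fin K → ℝ
  μ_mem : ∀ a, μ a ∈ SPEF.S toSPEF
  μ_best : ∀ a : Fin K, a ≠ 0 → μ a < μ 0

namespace Bandit

variable {K : ℕ} [NeZero K]

/-- KL divergence of the underlying family. -/
noncomputable def d (M : Bandit K) : ℝ → ℝ → ℝ := M.toSPEF.d

/-- The weighted mean `x_{1,a}(N₁, N_a)`. -/
noncomputable def x1 (M : Bandit K) (a : Fin K) (N1 Na : ℝ) : ℝ :=
  (N1 * M.μ 0 + Na * M.μ a) / (N1 + Na)

/-- The index `W_a(N₁, N_a)` of an arm `a ≠ 1`. -/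
noncomputable def W (M : Bandit K) (a : Fin K) (N1 Na : ℝ) : ℝ :=
  N1 * M.d (M.μ 0) (M.x1 a N1 Na) + Na * M.d (M.μ a) (M.x1 a N1 Na)

/-- The set `{2, …, K}` of suboptimal arms. -/
def alt (K : ℕ) [NeZero K] : Finset (Fin K) := Finset.univ.filter (fun a => a ≠ 0)

/-- The anchor function `g(μ, N)`. -/
noncomputable def g (M : Bandit K) (Nv : Fin K → ℝ) : ℝ :=
  (∑ a ∈ alt K, M.d (M.μ 0) (M.x1 a (Nv 0) (Nv a)) / M.d (M.μ a) (M.x1 a (Nv 0) (Nv a))) - 1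

end Bandit

namespace SPEF

variable (F : SPEF)

lemma contDiffAt_b {t : ℝ} (ht : t ∈ F.Θ) : ContDiffAt ℝ (⊤ : ℕ∞) F.b t :=
  F.b_smooth.contDiffAt (F.Θ_isOpen.mem_nhds ht)

lemma hasDerivAt_b {t : ℝ} (ht : t ∈ F.Θ) : HasDerivAt F.b (deriv F.b t) t :=
  ((F.contDiffAt_b ht).differentiableAt (by simp)).hasDerivAt

lemma hasDerivAt_deriv_b {t : ℝ} (ht : t ∈ F.Θ) :
    HasDerivAt (deriv F.b) (iteratedDeriv 2 F.b t) t := by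
  have h : ContDiffOn ℝ 1 (deriv F.b) F.Θ :=
    F.b_smooth.deriv_of_isOpen F.Θ_isOpen (by norm_cast)
  have h' := ((h.contDiffAt (F.Θ_isOpen.mem_nhds ht)).differentiableAt (by simp)).hasDerivAt
  rwa [show iteratedDeriv 2 F.b t = deriv (deriv F.b) t by
    rw [iteratedDeriv_succ, iteratedDeriv_one]]

lemma convex_Θ : Convex ℝ F.Θ := F.Θ_ordConnected.convex

lemma continuousOn_deriv_b : ContinuousOn (deriv F.b) F.Θ := fun _ ht =>
  (F.hasDerivAt_deriv_b ht).continuousAt.continuousWithinAt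

lemma strictMonoOn_deriv_b : StrictMonoOn (deriv F.b) F.Θ := by
  refine strictMonoOn_of_deriv_pos F.convex_Θ F.continuousOn_deriv_b fun t ht => ?_
  have ht' := interior_subset ht
  rw [(F.hasDerivAt_deriv_b ht').deriv]
  exact F.b_conv t ht'

lemma θof_deriv_b {t : ℝ} (ht : t ∈ F.Θ) : F.θof (deriv F.b t) = t :=
  F.strictMonoOn_deriv_b.injOn (F.θof_mem _ ⟨t, ht, rfl⟩) ht (F.θof_spec _ ⟨t, ht, rfl⟩)

lemma strictMonoOn_θof : StrictMonoOn F.θof F.S := by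
  rintro _ ⟨s, hs, rfl⟩ _ ⟨t, ht, rfl⟩ hst
  rw [F.θof_deriv_b hs, F.θof_deriv_b ht]
  exact (F.strictMonoOn_deriv_b.lt_iff_lt hs ht).1 hst

lemma ordConnected_S : F.S.OrdConnected :=
  (F.convex_Θ.isPreconnected.image _ F.continuousOn_deriv_b).ordConnected

lemma image_θof_S : F.θof '' F.S = F.Θ := by
  ext t
  constructor
  · rintro ⟨x, hx, rfl⟩
    exact F.θof_mem x hx
  · exact fun ht => ⟨_, ⟨t, ht, rfl⟩, F.θof_deriv_b ht⟩

lemma hasDerivAt_θof {x : ℝ} (hx : F.S ∈ nhds x) :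
    HasDerivAt F.θof (iteratedDeriv 2 F.b (F.θof x))⁻¹ x := by
  have hmem := F.θof_mem x (mem_of_mem_nhds hx)
  refine HasDerivAt.of_local_left_inverse ?_ (F.hasDerivAt_deriv_b hmem)
    (F.b_conv _ hmem).ne' ?_
  · refine F.strictMonoOn_θof.continuousAt_of_image_mem_nhds hx ?_
    rw [F.image_θof_S]
    exact F.Θ_isOpen.mem_nhds hmem
  · filter_upwards [hx] with y hy using F.θof_spec y hy

lemma hasDerivAt_d (μ : ℝ) {x : ℝ} (hx : F.S ∈ nhds x) :
    HasDerivAt (F.d μ) ((iteratedDeriv 2 F.b (F.θof x))⁻¹ * (x - μ)) x := by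
  have hxS := mem_of_mem_nhds hx
  have hθ := F.hasDerivAt_θof hx
  have hb := (F.hasDerivAt_b (F.θof_mem x hxS)).comp x hθ
  rw [F.θof_spec x hxS] at hb
  exact (((((hasDerivAt_const x (F.θof μ)).sub hθ).mul_const μ).sub_const _).add hb).congr_deriv
    (by ring)

lemma d_pos {μ x : ℝ} (hμ : μ ∈ F.S) (hx : x ∈ F.S) (h : μ < x) : 0 < F.d μ x := by
  have hlt := F.strictMonoOn_θof hμ hx h
  have hΘμ := F.θof_mem μ hμ
  have hΘx := F.θof_mem x hx
  have hsub : Set.Icc (F.θof μ) (F.θof x) ⊆ F.Θ := F.Θ_ordConnected.out hΘμ hΘx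
  obtain ⟨c, hc, hslope⟩ := exists_hasDerivAt_eq_slope F.b (deriv F.b) hlt
    (fun t ht => (F.hasDerivAt_b (hsub ht)).continuousAt.continuousWithinAt)
    (fun t ht => F.hasDerivAt_b (hsub (Set.Ioo_subset_Icc_self ht)))
  have hμc := F.strictMonoOn_deriv_b hΘμ (hsub (Set.Ioo_subset_Icc_self hc)) hc.1
  rw [F.θof_spec μ hμ, hslope, lt_div_iff₀ (sub_pos.2 hlt)] at hμc
  unfold d
  linarith

end SPEF

namespace Bandit

variable {K : ℕ} [NeZero K] (M : Bandit K) {a : Fin K} {N1 n : ℝ}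

lemma x1_mem_Ioo (ha : a ≠ 0) (hN1 : 0 < N1) (hn : 0 < n) :
    M.x1 a N1 n ∈ Set.Ioo (M.μ a) (M.μ 0) := by
  have h := M.μ_best a ha
  constructor
  · rw [x1, lt_div_iff₀ (by positivity)]
    nlinarith
  · rw [x1, div_lt_iff₀ (by positivity)]
    nlinarith

lemma S_mem_nhds_x1 (ha : a ≠ 0) (hN1 : 0 < N1) (hn : 0 < n) :
    M.toSPEF.S ∈ nhds (M.x1 a N1 n) :=
  Filter.mem_of_superset (isOpen_Ioo.mem_nhds (M.x1_mem_Ioo ha hN1 hn))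
    (Set.Ioo_subset_Icc_self.trans (M.ordConnected_S.out (M.μ_mem a) (M.μ_mem 0)))

lemma d_x1_pos (ha : a ≠ 0) (hN1 : 0 < N1) (hn : 0 < n) :
    0 < M.d (M.μ a) (M.x1 a N1 n) :=
  M.d_pos (M.μ_mem a) (mem_of_mem_nhds (M.S_mem_nhds_x1 ha hN1 hn)) (M.x1_mem_Ioo ha hN1 hn).1

/-- The terms coming from the variation of `x_{1,a}` cancel, as `x_{1,a}` minimizes
`x ↦ N₁ d(μ₁, x) + N_a d(μ_a, x)`. -/
lemma hasDerivAt_W (ha : a ≠ 0) (hN1 : 0 < N1) (hn : 0 < n) :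
    HasDerivAt (M.W a N1) (M.d (M.μ a) (M.x1 a N1 n)) n := by
  have hne : N1 + n ≠ 0 := by positivity
  have hS := M.S_mem_nhds_x1 ha hN1 hn
  obtain ⟨x', hx⟩ : ∃ x', HasDerivAt (M.x1 a N1) x' n :=
    ⟨_, (((hasDerivAt_id n).mul_const (M.μ a)).const_add (N1 * M.μ 0)).div
      ((hasDerivAt_id n).const_add N1) hne⟩
  have h0 := (M.hasDerivAt_d (M.μ 0) hS).comp n hx
  have h1 := (M.hasDerivAt_d (M.μ a) hS).comp n hx
  have hmean : N1 * (M.x1 a N1 n - M.μ 0) + n * (M.x1 a N1 n - M.μ a) = 0 := by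
    rw [x1]
    field_simp
    ring
  refine ((h0.const_mul N1).add ((hasDerivAt_id n).mul h1)).congr_deriv ?_
  simp only [id, Function.comp_apply, Bandit.d]
  linear_combination ((iteratedDeriv 2 M.b (M.θof (M.x1 a N1 n)))⁻¹ * x') * hmean

end Bandit

open Bandit

/-- Proposition 4.4, fluid dynamics when `g < 0`: keeping `N₁` and the
allocations off `B` constant while the indexes in `B` stay equal, the common index and
each allocation in `B` evolve by the stated ODEs and are strictly increasing. -/
theorem statement_10 {K : ℕ} [NeZero K] (M : Bandit K)
    (B : Finset (Fin K)) (hBne : B.Nonempty) (hBsub : B ⊆ alt K)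
    (J : Set ℝ) (hJopen : IsOpen J) (hJconn : Set.OrdConnected J) (hJpos : J ⊆ Set.Ioi 0)
    (Nf Nf' : ℝ → Fin K → ℝ) (IB : ℝ → ℝ)
    (hpos : ∀ N ∈ J, ∀ a, 0 < Nf N a)
    (hderiv : ∀ N ∈ J, ∀ a, HasDerivAt (fun t => Nf t a) (Nf' N a) N)
    (hsum : ∀ N ∈ J, ∑ a, Nf N a = N)
    (hconst1 : ∀ N ∈ J, ∀ N' ∈ J, Nf N 0 = Nf N' 0)
    (hconst : ∀ a ∈ alt K \ B, ∀ N ∈ J, ∀ N' ∈ J, Nf N a = Nf N' a)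
    (hIB : ∀ N ∈ J, ∀ a ∈ B, M.W a (Nf N 0) (Nf N a) = IB N) :
    (∀ N ∈ J,
      HasDerivAt IB (∑ a ∈ B, (M.d (M.μ a) (M.x1 a (Nf N 0) (Nf N a)))⁻¹)⁻¹ N ∧
      ∀ a ∈ B, Nf' N a =
        (M.d (M.μ a) (M.x1 a (Nf N 0) (Nf N a)))⁻¹ *
          (∑ b ∈ B, (M.d (M.μ b) (M.x1 b (Nf N 0) (Nf N b)))⁻¹)⁻¹) ∧
    StrictMonoOn IB J ∧
    ∀ a ∈ B, StrictMonoOn (fun N => Nf N a) J := by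
  have hne0 : ∀ a ∈ B, a ≠ 0 := fun a ha => by simpa [alt] using hBsub ha
  have hdpos : ∀ N ∈ J, ∀ a ∈ B, 0 < M.d (M.μ a) (M.x1 a (Nf N 0) (Nf N a)) :=
    fun N hN a ha => M.d_x1_pos (hne0 a ha) (hpos N hN 0) (hpos N hN a)
  have hsum_pos : ∀ N ∈ J, 0 < ∑ a ∈ B, (M.d (M.μ a) (M.x1 a (Nf N 0) (Nf N a)))⁻¹ :=
    fun N hN => Finset.sum_pos (fun a ha => inv_pos.2 (hdpos N hN a ha)) hBne
  have hIB' : ∀ N ∈ J, ∀ a ∈ B,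
      HasDerivAt IB (M.d (M.μ a) (M.x1 a (Nf N 0) (Nf N a)) * Nf' N a) N := by
    intro N hN a ha
    refine ((M.hasDerivAt_W (hne0 a ha) (hpos N hN 0) (hpos N hN a)).comp N
      (hderiv N hN a)).congr_of_eventuallyEq ?_
    filter_upwards [hJopen.mem_nhds hN] with t ht
    rw [← hIB t ht a ha, hconst1 t ht N hN, Function.comp_apply]
  have hzero : ∀ N ∈ J, ∀ a ∉ B, Nf' N a = 0 := by
    intro N hN a ha
    refine (hderiv N hN a).unique ((hasDerivAt_const N (Nf N a)).congr_of_eventuallyEq ?_)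
    filter_upwards [hJopen.mem_nhds hN] with t ht
    by_cases h0 : a = 0
    · rw [h0]
      exact hconst1 t ht N hN
    · exact hconst a (by simp [alt, h0, ha]) t ht N hN
  have hone : ∀ N ∈ J, ∑ a ∈ B, Nf' N a = 1 := by
    intro N hN
    rw [Finset.sum_subset (Finset.subset_univ B) fun a _ ha => hzero N hN a ha]
    refine (HasDerivAt.fun_sum fun a _ => hderiv N hN a).unique
      ((hasDerivAt_id N).congr_of_eventuallyEq ?_)
    filter_upwards [hJopen.mem_nhds hN] with t ht using hsum t ht
  have hNf' : ∀ N ∈ J, ∀ a ∈ B,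
      Nf' N a = (M.d (M.μ a) (M.x1 a (Nf N 0) (Nf N a)))⁻¹ * deriv IB N := by
    intro N hN a ha
    rw [(hIB' N hN a ha).deriv, inv_mul_cancel_left₀ (hdpos N hN a ha).ne']
  have hderivIB : ∀ N ∈ J,
      deriv IB N = (∑ a ∈ B, (M.d (M.μ a) (M.x1 a (Nf N 0) (Nf N a)))⁻¹)⁻¹ := by
    intro N hN
    refine eq_inv_of_mul_eq_one_right ?_
    rw [Finset.sum_mul, ← hone N hN]
    exact Finset.sum_congr rfl fun a ha => (hNf' N hN a ha).symm
  have hdiff : ∀ N ∈ J, HasDerivAt IB (deriv IB N) N := fun N hN =>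
    (hIB' N hN _ hBne.choose_spec).differentiableAt.hasDerivAt
  have hIBpos : ∀ N ∈ J, 0 < deriv IB N := fun N hN => by
    rw [hderivIB N hN]
    exact inv_pos.2 (hsum_pos N hN)
  refine ⟨fun N hN => ?_, ?_, fun a ha => ?_⟩
  · rw [← hderivIB N hN]
    exact ⟨hdiff N hN, hNf' N hN⟩
  · exact strictMonoOn_of_deriv_pos hJconn.convex
      (fun N hN => (hdiff N hN).continuousAt.continuousWithinAt)
      fun N hN => hIBpos N (interior_subset hN)
  · refine strictMonoOn_of_deriv_pos hJconn.convex
      (fun N hN => (hderiv N hN a).continuousAt.continuousWithinAt) fun N hN => ?_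
    have hN' := interior_subset hN
    rw [(hderiv N hN' a).deriv, hNf' N hN' a ha]
    exact mul_pos (inv_pos.2 (hdpos N hN' a ha)) (hIBpos N hN')
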